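/- The greedy assignment z is well defined and feasible: Ť_ℓ ≤ z_ℓ ≤ T̂_ℓ for every ℓ ∈ {1, …, m}, and Σ_{ℓ=1}^m z_ℓ = 1. In particular, the feasible set {z' : Ť_ℓ ≤ z'_ℓ ≤ T̂_ℓ for all ℓ and Σ_ℓ z'_ℓ = 1} is nonempty, so every row of an interval-valued Markov chain admits at least one instantiation as a probability distribution. -/

import Mathlib

/-!
Since each `z ℓ` is at most what the budget leaves once the lower bounds of the later indices are
reserved, switching from `lo` to `z` on an initial segment of the indices never exceeds the budget.
The segment strictly below `ℓ` shows that at least `lo ℓ` is left for `ℓ`; the full segment gives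
`∑ z ≤ c`. Conversely, either the greedy choice is `hi` at every index, or at some `ℓ` it exhausts
the budget left by the others, and then `lo ≤ z` beyond `ℓ` gives `c ≤ ∑ z`.
-/

open Finset

section Assignment

variable {ι G : Type*} [AddCommGroup G] [LinearOrder G]

/-- The greedy distribution of a total budget `c` under the interval bounds `lo` and `hi`, stated
as the recursion that determines it: every index receives as much as possible while the lower bounds
of all later indices stay affordable. For a row of an interval-valued Markov chain, `c = 1`. -/
def IsGreedyAssignment [PartialOrder ι] [LocallyFiniteOrderBot ι] [LocallyFiniteOrderTop ι]
    (lo hi : ι → G) (c : G) (z : ι → G) : Prop :=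
  ∀ ℓ, z ℓ = min (hi ℓ) (c - ∑ k ∈ Iio ℓ, z k - ∑ k ∈ Ioi ℓ, lo k)

/-- Feasibility of `z` for the interval bounds `lo`, `hi` and the total budget `c`. With `c = 1` and
`0 ≤ lo`, these are the probability distributions instantiating a row of an interval-valued Markov
chain. -/
def IsFeasibleAssignment [Fintype ι] (lo hi : ι → G) (c : G) (z : ι → G) : Prop :=
  (∀ ℓ, lo ℓ ≤ z ℓ ∧ z ℓ ≤ hi ℓ) ∧ ∑ ℓ, z ℓ = c

end Assignment

theorem exists_eq_Iic_of_isLowerSet {ι : Type*} [LinearOrder ι] [LocallyFiniteOrderBot ι]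
    {s : Finset ι} (hs : IsLowerSet (s : Set ι)) (hne : s.Nonempty) : ∃ ℓ, s = Iic ℓ := by
  refine ⟨s.max' hne, ext fun k => ?_⟩
  rw [mem_Iic]
  exact ⟨s.le_max' k, fun hk => hs hk (s.max'_mem hne)⟩

theorem compl_Iic_eq_Ioi {ι : Type*} [LinearOrder ι] [Fintype ι] [LocallyFiniteOrderBot ι]
    [LocallyFiniteOrderTop ι] (ℓ : ι) : (Iic ℓ)ᶜ = Ioi ℓ := by
  ext k
  simp

namespace IsGreedyAssignment

variable {ι G : Type*} [AddCommGroup G] [LinearOrder G]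

section PartialOrder

variable [PartialOrder ι] [LocallyFiniteOrderBot ι] [LocallyFiniteOrderTop ι]
  {lo hi z : ι → G} {c : G}

theorem le_upper (hz : IsGreedyAssignment lo hi c z) (ℓ : ι) : z ℓ ≤ hi ℓ :=
  (hz ℓ).trans_le (min_le_left _ _)

theorem sum_Iic_add_sum_Ioi_le [IsOrderedAddMonoid G] (hz : IsGreedyAssignment lo hi c z) (ℓ : ι) :
    ∑ k ∈ Iic ℓ, z k + ∑ k ∈ Ioi ℓ, lo k ≤ c := by
  have hbudget : z ℓ ≤ c - ∑ k ∈ Iio ℓ, z k - ∑ k ∈ Ioi ℓ, lo k :=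
    (hz ℓ).trans_le (min_le_right _ _)
  rwa [le_sub_iff_add_le, le_sub_iff_add_le, add_right_comm, add_sum_Iio_eq_sum_Iic] at hbudget

theorem eq_upper_or_sum_Iic_add_sum_Ioi_eq (hz : IsGreedyAssignment lo hi c z) (ℓ : ι) :
    z ℓ = hi ℓ ∨ ∑ k ∈ Iic ℓ, z k + ∑ k ∈ Ioi ℓ, lo k = c := by
  refine (min_choice _ _).imp (hz ℓ).trans fun hmin => ?_
  have hbudget := (hz ℓ).trans hmin
  rwa [eq_sub_iff_add_eq, eq_sub_iff_add_eq, add_right_comm, add_sum_Iio_eq_sum_Iic] at hbudget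

end PartialOrder

section LinearOrder

variable [IsOrderedAddMonoid G] [LinearOrder ι] [Fintype ι] [LocallyFiniteOrderBot ι]
  [LocallyFiniteOrderTop ι] {lo hi z : ι → G} {c : G}

theorem sum_add_sum_compl_le (hz : IsGreedyAssignment lo hi c z) (hlo : ∑ ℓ, lo ℓ ≤ c)
    {s : Finset ι} (hs : IsLowerSet (s : Set ι)) : ∑ k ∈ s, z k + ∑ k ∈ sᶜ, lo k ≤ c := by
  obtain rfl | hne := s.eq_empty_or_nonempty
  · simpa using hlo
  · obtain ⟨ℓ, rfl⟩ := exists_eq_Iic_of_isLowerSet hs hne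
    rw [compl_Iic_eq_Ioi]
    exact hz.sum_Iic_add_sum_Ioi_le ℓ

theorem sum_le (hz : IsGreedyAssignment lo hi c z) (hlo : ∑ ℓ, lo ℓ ≤ c) : ∑ ℓ, z ℓ ≤ c := by
  simpa using hz.sum_add_sum_compl_le hlo (s := univ) (by simp [isLowerSet_univ])

theorem lower_le (hz : IsGreedyAssignment lo hi c z) (hle : ∀ ℓ, lo ℓ ≤ hi ℓ)
    (hlo : ∑ ℓ, lo ℓ ≤ c) (ℓ : ι) : lo ℓ ≤ z ℓ := by
  have hcompl : (Iio ℓ)ᶜ = Ici ℓ := by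
    ext k
    simp
  have hreserve : ∑ k ∈ Iio ℓ, z k + ∑ k ∈ Ici ℓ, lo k ≤ c :=
    hcompl ▸ hz.sum_add_sum_compl_le hlo (s := Iio ℓ) (by simp [isLowerSet_Iio])
  rw [hz ℓ]
  refine le_min (hle ℓ) ?_
  rwa [le_sub_iff_add_le, le_sub_iff_add_le, add_sum_Ioi_eq_sum_Ici, add_comm]

theorem le_sum (hz : IsGreedyAssignment lo hi c z) (hlower : ∀ ℓ, lo ℓ ≤ z ℓ)
    (hhi : c ≤ ∑ ℓ, hi ℓ) : c ≤ ∑ ℓ, z ℓ := by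
  by_cases hupper : ∀ ℓ, z ℓ = hi ℓ
  · simpa only [hupper] using hhi
  · obtain ⟨ℓ, hℓ⟩ := not_forall.mp hupper
    calc c = ∑ k ∈ Iic ℓ, z k + ∑ k ∈ Ioi ℓ, lo k :=
          ((hz.eq_upper_or_sum_Iic_add_sum_Ioi_eq ℓ).resolve_left hℓ).symm
      _ ≤ ∑ k ∈ Iic ℓ, z k + ∑ k ∈ Ioi ℓ, z k := by gcongr with k; exact hlower k
      _ = ∑ k, z k := by rw [← compl_Iic_eq_Ioi, sum_add_sum_compl]

end LinearOrder

end IsGreedyAssignment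

theorem greedy_assignment_feasible_general {ι G : Type*} [AddCommGroup G] [LinearOrder G]
    [IsOrderedAddMonoid G] [LinearOrder ι] [Fintype ι] [LocallyFiniteOrderBot ι]
    [LocallyFiniteOrderTop ι] {lo hi z : ι → G} {c : G} (hle : ∀ ℓ, lo ℓ ≤ hi ℓ)
    (hlo : ∑ ℓ, lo ℓ ≤ c) (hhi : c ≤ ∑ ℓ, hi ℓ) (hz : IsGreedyAssignment lo hi c z) :
    IsFeasibleAssignment lo hi c z :=
  have hlower := hz.lower_le hle hlo
  ⟨fun ℓ => ⟨hlower ℓ, hz.le_upper ℓ⟩, (hz.sum_le hlo).antisymm (hz.le_sum hlower hhi)⟩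

/-- The greedy probability assignment `z` of the interval value-iteration
algorithm is feasible: it respects the interval bounds and sums to one.
In particular, the feasible set of an IMC row is nonempty. -/
theorem greedy_assignment_feasible
    (m : ℕ) (hm : 1 ≤ m)
    (Tlo Thi : Fin m → ℝ)
    (h0 : ∀ ℓ, 0 ≤ Tlo ℓ) (hle : ∀ ℓ, Tlo ℓ ≤ Thi ℓ)
    (hsumlo : ∑ ℓ, Tlo ℓ ≤ 1) (hsumhi : 1 ≤ ∑ ℓ, Thi ℓ)
    (z : Fin m → ℝ)
    (hz : ∀ ℓ, z ℓ = min (Thi ℓ)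
      (1 - ∑ k ∈ Finset.Iio ℓ, z k - ∑ k ∈ Finset.Ioi ℓ, Tlo k)) :
    ((∀ ℓ, Tlo ℓ ≤ z ℓ ∧ z ℓ ≤ Thi ℓ) ∧ ∑ ℓ, z ℓ = 1) ∧
    ∃ z' : Fin m → ℝ, (∀ ℓ, Tlo ℓ ≤ z' ℓ ∧ z' ℓ ≤ Thi ℓ) ∧ ∑ ℓ, z' ℓ = 1 := by
  have hfeasible := greedy_assignment_feasible_general hle hsumlo hsumhi hz
  exact ⟨hfeasible, z, hfeasible⟩
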